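/- arXiv:2001.04644 — 6 statements merged into one kernel-verified Lean document; each statement's English description precedes it below -/
import Mathlib

section
/- Let G be a digraph on N and let (γ,H,c) be utility parameters. If G is an equilibrium network for non-consensual agents with parameters (γ,H,c), or an equilibrium network for consensual agents with parameters (γ,H,c), then G contains no directed cycles; equivalently, every edge of G joining two nodes of the same strongly connected component is an undirected edge. -/
/-!
If `ij` is a single edge inside a strongly connected component, then adding the reverse edge `ji`
changes neither reachability nor, consequently, the levels (`level_insert`). For `j` it adds an
out-neighbour, removes a subordinate and only enlarges the sets `P_j(G,k)`, so `j` strictly gains.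
For `i` the subordinates stay the same (`ij` is already present) and the sets `P_i(G,k)` only grow,
so `i` does not lose. Hence `ji` would be added by agents of either type, and `G` is not an
equilibrium.
-/

open Finset MeasureTheory ProbabilityTheory

attribute [local instance 10] Classical.propDecidable

noncomputable section

/-- A digraph on the agent set `Fin n`: a finite set of ordered pairs (directed edges). -/
abbrev Network (n : ℕ) := Finset (Fin n × Fin n)

variable {n : ℕ}

/-- Edges only join distinct nodes. -/
def validNetwork (G : Network n) : Prop := ∀ p ∈ G, p.1 ≠ p.2

/-- Out-neighborhood `N_out(i,G)`. -/
def Nout (G : Network n) (i : Fin n) : Finset (Fin n) := univ.filter fun j => (i, j) ∈ G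

/-- The set of subordinates `N_in^s(i,G)`. -/
def NinS (G : Network n) (i : Fin n) : Finset (Fin n) :=
  univ.filter fun j => (j, i) ∈ G ∧ (i, j) ∉ G

/-- `P_i(G,k) = {i} ∪ {j : kj ∈ G and ij, ji ∈ G}`. -/
def Pset (G : Network n) (i k : Fin n) : Finset (Fin n) :=
  insert i (univ.filter fun j => (k, j) ∈ G ∧ (i, j) ∈ G ∧ (j, i) ∈ G)

/-- `P_i(G) = ⋂_{k ∈ N_in^s(i,G)} P_i(G,k)`. -/
def Pall (G : Network n) (i : Fin n) : Finset (Fin n) :=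
  univ.filter fun j => ∀ k ∈ NinS G i, j ∈ Pset G i k

/-- Reachability along directed edges. -/
def reach (G : Network n) : Fin n → Fin n → Prop :=
  Relation.ReflTransGen fun a b => (a, b) ∈ G

/-- `i` and `j` belong to the same strongly connected component. -/
def sameSCC (G : Network n) (i j : Fin n) : Prop := reach G i j ∧ reach G j i

/-- The strongly connected component `Γ(i,G)` of `i`. -/
def sccSet (G : Network n) (i : Fin n) : Finset (Fin n) := univ.filter fun j => sameSCC G i j

/-- An arc of the condensation `C(G)`, between the SCC of `a` and the SCC of `b`. -/
def condArc (G : Network n) (a b : Fin n) : Prop :=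
  ¬ sameSCC G a b ∧ ∃ a' b' : Fin n, sameSCC G a a' ∧ sameSCC G b b' ∧ (a', b') ∈ G

/-- The SCC of `a` is a source of the condensation `C(G)`. -/
def isSourceSCC (G : Network n) (a : Fin n) : Prop := ∀ b, ¬ condArc G b a

/-- The level `ℓ_i(C(G))`: the largest number of arcs on a directed path in the
condensation `C(G)` from a source of `C(G)` to the SCC of `i`. -/
def level (G : Network n) (i : Fin n) : ℕ :=
  sSup {m : ℕ | ∃ f : ℕ → Fin n, isSourceSCC G (f 0) ∧ sameSCC G (f m) i ∧
    ∀ t, t < m → condArc G (f t) (f (t + 1))}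

/-- The utility `u_i(G)` of agent `i` in the network `G`. -/
def utility (γ c : ℝ) (H : ℕ → ℝ) (G : Network n) (i : Fin n) : ℝ :=
  ((Nout G i).card : ℝ) * γ + H (level G i)
    - c * ∑ k ∈ NinS G i, (1 : ℝ) / ((Pset G i k).card : ℝ)

/-- Utility parameters: `γ > 0`, `c > 0`, `H` strictly increasing with `H 0 ≥ 0`. -/
def UtilityParams (γ c : ℝ) (H : ℕ → ℝ) : Prop :=
  0 < γ ∧ 0 < c ∧ StrictMono H ∧ 0 ≤ H 0

/-- Equilibrium network for non-consensual agents. -/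
def eqNonConsensual (γ c : ℝ) (H : ℕ → ℝ) (G : Network n) : Prop :=
  ∀ i j : Fin n, i ≠ j →
    ((i, j) ∈ G → utility γ c H (G.erase (i, j)) i < utility γ c H G i) ∧
    ((i, j) ∉ G → utility γ c H (insert (i, j) G) i < utility γ c H G i)

/-- Equilibrium network for consensual agents. -/
def eqConsensual (γ c : ℝ) (H : ℕ → ℝ) (G : Network n) : Prop :=
  ∀ i j : Fin n, i ≠ j →
    ((i, j) ∈ G → utility γ c H (G.erase (i, j)) i < utility γ c H G i) ∧
    ((i, j) ∉ G →
      utility γ c H (insert (i, j) G) i < utility γ c H G i ∨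
        (utility γ c H G i ≤ utility γ c H (insert (i, j) G) i ∧
          utility γ c H (insert (i, j) G) j < utility γ c H G j))

/-- `G` has no directed cycles: every edge joining two nodes of the same SCC
is an undirected edge. -/
def noDirectedCycles (G : Network n) : Prop :=
  ∀ i j : Fin n, (i, j) ∈ G → sameSCC G i j → (j, i) ∈ G

/-- Reachability forgetting edge directions. -/
def weakReach (G : Network n) : Fin n → Fin n → Prop :=
  Relation.ReflTransGen fun a b => (a, b) ∈ G ∨ (b, a) ∈ G

/-- `G` is weakly connected. -/
def weaklyConnected (G : Network n) : Prop := ∀ i j : Fin n, weakReach G i j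

/-- Every SCC of `G` is a complete connected component: any two distinct nodes of
the same SCC are joined by an undirected edge. -/
def completeSCCs (G : Network n) : Prop :=
  ∀ i j : Fin n, i ≠ j → sameSCC G i j → (i, j) ∈ G ∧ (j, i) ∈ G

/-- The undirected edge `ij, ji ∈ G` is critical: `Γ(i,G) ≠ Γ(i, G - ij)`. -/
def criticalEdge (G : Network n) (i j : Fin n) : Prop :=
  (i, j) ∈ G ∧ (j, i) ∈ G ∧
    {k : Fin n | sameSCC G i k} ≠ {k : Fin n | sameSCC (G.erase (i, j)) i k}

/-- `L_ℓ(G) = |{j : ℓ_j(C(G)) < ℓ}|`. -/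
def Lcard (G : Network n) (ℓ : ℕ) : ℕ :=
  (univ.filter fun j : Fin n => level G j < ℓ).card

/-- `G` is a sequential hierarchy: weakly connected, no directed cycles, exactly one
SCC per level, and (if more than one level) every node has a single edge towards
every node of strictly higher level. -/
def seqHierarchy (G : Network n) : Prop :=
  weaklyConnected G ∧ noDirectedCycles G ∧
  (∀ i j : Fin n, level G i = level G j → sameSCC G i j) ∧
  ((∃ i j : Fin n, level G i ≠ level G j) →
    ∀ i j : Fin n, level G i < level G j → (i, j) ∈ G ∧ (j, i) ∉ G)

/-- The better-response update of `G` at the ordered pair `p = (i,j)`. -/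
def brUpdate (consensual : Bool) (γ c : ℝ) (H : ℕ → ℝ) (G : Network n)
    (p : Fin n × Fin n) : Network n :=
  if p ∈ G then
    if utility γ c H G p.1 ≤ utility γ c H (G.erase p) p.1 then G.erase p else G
  else if consensual then
    if utility γ c H G p.1 ≤ utility γ c H (insert p G) p.1 ∧
        utility γ c H G p.2 ≤ utility γ c H (insert p G) p.2 then insert p G else G
  else
    if utility γ c H G p.1 ≤ utility γ c H (insert p G) p.1 then insert p G else G

/-- Equilibrium network for the given agent type. -/
def equilibrium (consensual : Bool) (γ c : ℝ) (H : ℕ → ℝ) (G : Network n) : Prop :=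
  if consensual then eqConsensual γ c H G else eqNonConsensual γ c H G


theorem reach_insert {G : Network n} {i j : Fin n} (h : reach G j i) :
    reach (insert (j, i) G) = reach G := by
  funext a b
  refine propext ⟨fun hab => ?_, fun hab => ?_⟩
  · induction hab with
    | refl => exact Relation.ReflTransGen.refl
    | tail _ hbc ih =>
      rcases Finset.mem_insert.1 hbc with he | he
      · obtain ⟨rfl, rfl⟩ := Prod.mk.inj he
        exact Relation.ReflTransGen.trans ih h
      · exact Relation.ReflTransGen.tail ih he
  · exact Relation.ReflTransGen.mono (fun _ _ hx => Finset.mem_insert_of_mem hx) _ _ hab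

theorem sameSCC_insert {G : Network n} {i j : Fin n} (h : reach G j i) :
    sameSCC (insert (j, i) G) = sameSCC G := by
  funext a b
  simp only [sameSCC, reach_insert h]

/-- The new edge lies inside one strongly connected component, so it creates no new arc. -/
theorem condArc_insert {G : Network n} {i j : Fin n} (h : sameSCC G j i) :
    condArc (insert (j, i) G) = condArc G := by
  funext a b
  simp only [condArc, sameSCC_insert h.1]
  refine propext (and_congr_right fun hab => ⟨?_, ?_⟩)
  · rintro ⟨a', b', ha, hb, he⟩
    rcases Finset.mem_insert.1 he with he | he
    · obtain ⟨rfl, rfl⟩ := Prod.mk.inj he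
      exact absurd ⟨(ha.1.trans h.1).trans hb.2, (hb.1.trans h.2).trans ha.2⟩ hab
    · exact ⟨a', b', ha, hb, he⟩
  · rintro ⟨a', b', ha, hb, he⟩
    exact ⟨a', b', ha, hb, Finset.mem_insert_of_mem he⟩

theorem level_insert {G : Network n} {i j : Fin n} (h : sameSCC G j i) :
    level (insert (j, i) G) = level G := by
  funext a
  simp only [level, isSourceSCC, condArc_insert h, sameSCC_insert h.1]

theorem Pset_mono {G G' : Network n} (h : G ⊆ G') (a k : Fin n) :
    Pset G a k ⊆ Pset G' a k := by
  refine Finset.insert_subset_insert _ fun x hx => ?_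
  simp only [Finset.mem_filter, Finset.mem_univ, true_and] at hx ⊢
  exact ⟨h hx.1, h hx.2.1, h hx.2.2⟩

/-- The burden of subordinates falls when edges are added without creating new subordinates. -/
theorem cost_le {G G' : Network n} (h : G ⊆ G') (a : Fin n) (hN : NinS G' a ⊆ NinS G a) :
    ∑ k ∈ NinS G' a, (1 : ℝ) / ((Pset G' a k).card : ℝ)
      ≤ ∑ k ∈ NinS G a, (1 : ℝ) / ((Pset G a k).card : ℝ) := by
  calc ∑ k ∈ NinS G' a, (1 : ℝ) / ((Pset G' a k).card : ℝ)
      ≤ ∑ k ∈ NinS G' a, (1 : ℝ) / ((Pset G a k).card : ℝ) := by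
        refine Finset.sum_le_sum fun k _ => ?_
        refine one_div_le_one_div_of_le ?_ ?_
        · exact_mod_cast Finset.card_pos.2 ⟨a, Finset.mem_insert_self _ _⟩
        · exact_mod_cast Finset.card_le_card (Pset_mono h a k)
    _ ≤ ∑ k ∈ NinS G a, (1 : ℝ) / ((Pset G a k).card : ℝ) :=
        Finset.sum_le_sum_of_subset_of_nonneg hN fun _ _ _ => by positivity

/-- If `ij` is present and `i`, `j` are strongly connected, adding `ji` does not harm `i`. -/
theorem utility_insert_target {G : Network n} {i j : Fin n} {γ c : ℝ} {H : ℕ → ℝ} (hγ : 0 < γ)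
    (hc : 0 < c) (hij : (i, j) ∈ G) (h : sameSCC G j i) :
    utility γ c H G i ≤ utility γ c H (insert (j, i) G) i := by
  have hsub : G ⊆ insert (j, i) G := Finset.subset_insert _ _
  have hcost := cost_le hsub i (by
    intro k hk
    simp only [NinS, Finset.mem_filter, Finset.mem_univ, true_and, Finset.mem_insert,
      Prod.mk.injEq] at hk ⊢
    grind)
  have hout : ((Nout G i).card : ℝ) ≤ ((Nout (insert (j, i) G) i).card : ℝ) := by
    refine Nat.cast_le.2 (Finset.card_le_card fun x hx => ?_)
    simp only [Nout, Finset.mem_filter, Finset.mem_univ, true_and] at hx ⊢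
    exact hsub hx
  have h1 := mul_le_mul_of_nonneg_right hout hγ.le
  have h2 := mul_le_mul_of_nonneg_left hcost hc.le
  simp only [utility, level_insert h]
  linarith

/-- If `j`, `i` are distinct and strongly connected, adding a missing `ji` strictly benefits `j`. -/
theorem utility_insert_source {G : Network n} {i j : Fin n} {γ c : ℝ} {H : ℕ → ℝ} (hγ : 0 < γ)
    (hc : 0 < c) (hne : j ≠ i) (hji : (j, i) ∉ G) (h : sameSCC G j i) :
    utility γ c H G j < utility γ c H (insert (j, i) G) j := by
  have hsub : G ⊆ insert (j, i) G := Finset.subset_insert _ _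
  have hcost := cost_le hsub j (by
    intro k hk
    simp only [NinS, Finset.mem_filter, Finset.mem_univ, true_and, Finset.mem_insert,
      Prod.mk.injEq] at hk ⊢
    grind)
  have hout : ((Nout G j).card : ℝ) < ((Nout (insert (j, i) G) j).card : ℝ) := by
    refine Nat.cast_lt.2 (Finset.card_lt_card ((Finset.ssubset_iff_of_subset fun x hx => ?_).2
      ⟨i, ?_, ?_⟩))
    · simp only [Nout, Finset.mem_filter, Finset.mem_univ, true_and] at hx ⊢
      exact hsub hx
    · simp [Nout]
    · simpa [Nout] using hji
  have h1 := mul_lt_mul_of_pos_right hout hγ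
  have h2 := mul_le_mul_of_nonneg_left hcost hc.le
  simp only [utility, level_insert h]
  linarith

/-- any equilibrium network (for either agent type) has no directed cycles. -/
theorem stmt0 {n : ℕ} (hn : 3 ≤ n) (G : Network n) (hG : validNetwork G)
    (γ c : ℝ) (H : ℕ → ℝ) (hpar : UtilityParams γ c H)
    (heq : eqNonConsensual γ c H G ∨ eqConsensual γ c H G) :
    noDirectedCycles G := by
  intro i j hij hscc
  by_contra hji
  have hne : j ≠ i := fun h => hG _ hij h.symm
  have hscc' : sameSCC G j i := ⟨hscc.2, hscc.1⟩
  have hi := utility_insert_target (H := H) hpar.1 hpar.2.1 hij hscc'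
  have hj := utility_insert_source (H := H) hpar.1 hpar.2.1 hne hji hscc'
  rcases heq with heq | heq
  · exact lt_asymm hj ((heq j i hne).2 hji)
  · rcases (heq j i hne).2 hji with h | h
    · exact lt_asymm hj h
    · exact absurd h.2 (not_lt.2 hi)

end
end

section
/- Let G be a digraph on N and let (γ,H,c) be utility parameters. If G is an equilibrium network for non-consensual agents with parameters (γ,H,c), then every strongly connected component of G is a complete connected component, i.e., every two distinct nodes lying in the same strongly connected component of G are joined by an undirected edge. -/
/-!
If `i` and `j` lie in the same SCC and `(i, j)` is not an edge, then adding it leaves reachability,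
hence the condensation and all levels, unchanged (`level_insert_eq`). It does not lower the
out-degree of `i`, and it does not raise the cost of `i`: no subordinate is gained and each
`P_i(G,k)` can only grow (`cost_insert_le`). So the utility of `i` does not drop, whereas an
equilibrium requires it to drop strictly. Applying this to `(i, j)` and `(j, i)` gives the
undirected edge.
-/

open Finset MeasureTheory ProbabilityTheory

attribute [local instance 10] Classical.propDecidable

noncomputable section

variable {n : ℕ}

/-- An edge `(i, j)` with `j` already reachable from `i` creates no new reachability. -/
lemma reach_insert_eq {G : Network n} {i j : Fin n} (h : reach G i j) :
    reach (insert (i, j) G) = reach G := by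
  funext a b
  apply propext
  constructor
  · intro hab
    induction hab with
    | refl => exact Relation.ReflTransGen.refl
    | tail _ hbc ih =>
      rcases Finset.mem_insert.1 hbc with e | e
      · obtain ⟨rfl, rfl⟩ := Prod.mk.inj e
        exact ih.trans h
      · exact ih.tail e
  · intro hab
    exact Relation.ReflTransGen.mono
      (p := fun x y => (x, y) ∈ insert (i, j) G) 
      (fun x y hxy => Finset.mem_insert_of_mem hxy) _ _ hab

lemma sameSCC_insert_eq {G : Network n} {i j : Fin n} (h : reach G i j) :
    sameSCC (insert (i, j) G) = sameSCC G := by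
  funext a b
  simp only [sameSCC, reach_insert_eq h]

/-- An edge added inside an SCC induces no arc of the condensation. -/
lemma condArc_insert_eq {G : Network n} {i j : Fin n} (h : sameSCC G i j) :
    condArc (insert (i, j) G) = condArc G := by
  funext a b
  simp only [condArc, sameSCC_insert_eq h.1]
  apply propext
  constructor
  · rintro ⟨hab, a', b', ha, hb, he⟩
    refine ⟨hab, a', b', ha, hb, ?_⟩
    rcases Finset.mem_insert.1 he with e | e
    · obtain ⟨rfl, rfl⟩ := Prod.mk.inj e
      exact absurd ⟨(ha.1.trans h.1).trans hb.2, (hb.1.trans h.2).trans ha.2⟩ hab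
    · exact e
  · rintro ⟨hab, a', b', ha, hb, he⟩
    exact ⟨hab, a', b', ha, hb, Finset.mem_insert_of_mem he⟩

lemma level_insert_eq {G : Network n} {i j : Fin n} (h : sameSCC G i j) (k : Fin n) :
    level (insert (i, j) G) k = level G k := by
  simp only [level, isSourceSCC, condArc_insert_eq h, sameSCC_insert_eq h.1]

lemma Pset_subset_insert (G : Network n) (i j k : Fin n) :
    Pset G i k ⊆ Pset (insert (i, j) G) i k := by
  intro x hx
  simp only [Pset, Finset.mem_insert, Finset.mem_filter, Finset.mem_univ, true_and] at hx ⊢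
  tauto

lemma NinS_insert_subset (G : Network n) {i j : Fin n} (hij : i ≠ j) :
    NinS (insert (i, j) G) i ⊆ NinS G i := by
  intro k hk
  simp only [NinS, Finset.mem_insert, Finset.mem_filter, Finset.mem_univ, true_and,
    Prod.mk.injEq] at hk ⊢
  obtain ⟨h1, h2⟩ := hk
  refine ⟨h1.resolve_left fun e => hij e.2, fun e => h2 (Or.inr e)⟩

/-- An extra out-edge of `i` never raises the cost `i` pays for its subordinates: it can only
remove subordinates and enlarge the sets `P_i(G,k)`. -/
lemma cost_insert_le (G : Network n) {i j : Fin n} (hij : i ≠ j) :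
    ∑ k ∈ NinS (insert (i, j) G) i, (1 : ℝ) / ((Pset (insert (i, j) G) i k).card : ℝ)
      ≤ ∑ k ∈ NinS G i, (1 : ℝ) / ((Pset G i k).card : ℝ) := by
  refine le_trans (Finset.sum_le_sum fun k _ => ?_)
    (Finset.sum_le_sum_of_subset_of_nonneg (NinS_insert_subset G hij) fun k _ _ => by positivity)
  have hpos : 0 < (Pset G i k).card := Finset.card_pos.2 ⟨i, Finset.mem_insert_self _ _⟩
  exact one_div_le_one_div_of_le (by exact_mod_cast hpos)
    (by exact_mod_cast Finset.card_le_card (Pset_subset_insert G i j k))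

lemma Nout_card_le_insert (G : Network n) (i j : Fin n) :
    (Nout G i).card ≤ (Nout (insert (i, j) G) i).card := by
  refine Finset.card_le_card fun k hk => ?_
  simp only [Nout, Finset.mem_filter, Finset.mem_univ, true_and] at hk ⊢
  exact Finset.mem_insert_of_mem hk

/-- Adding an edge towards a node of one's own SCC never lowers one's utility. -/
lemma utility_le_insert {G : Network n} {i j : Fin n} {γ c : ℝ} {H : ℕ → ℝ}
    (hγ : 0 ≤ γ) (hc : 0 ≤ c) (hij : i ≠ j) (h : sameSCC G i j) :
    utility γ c H G i ≤ utility γ c H (insert (i, j) G) i := by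
  unfold utility
  rw [level_insert_eq h]
  have h1 := mul_le_mul_of_nonneg_left (cost_insert_le G hij) hc
  have h2 : ((Nout G i).card : ℝ) * γ ≤ ((Nout (insert (i, j) G) i).card : ℝ) * γ :=
    mul_le_mul_of_nonneg_right (by exact_mod_cast Nout_card_le_insert G i j) hγ
  linarith

/-- An edge missing inside an SCC would be a weakly profitable deviation. -/
lemma edge_of_sameSCC {G : Network n} {γ c : ℝ} {H : ℕ → ℝ} (hpar : UtilityParams γ c H)
    (heq : eqNonConsensual γ c H G) {i j : Fin n} (hij : i ≠ j) (h : sameSCC G i j) :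
    (i, j) ∈ G := by
  by_contra hmem
  exact absurd ((heq i j hij).2 hmem)
    (not_lt.2 (utility_le_insert hpar.1.le hpar.2.1.le hij h))

/-- in a non-consensual equilibrium network every SCC is a complete
connected component. -/
theorem stmt1 {n : ℕ} (hn : 3 ≤ n) (G : Network n) (hG : validNetwork G)
    (γ c : ℝ) (H : ℕ → ℝ) (hpar : UtilityParams γ c H)
    (heq : eqNonConsensual γ c H G) :
    completeSCCs G := by
  intro i j hij h
  exact ⟨edge_of_sameSCC hpar heq hij h, edge_of_sameSCC hpar heq hij.symm ⟨h.2, h.1⟩⟩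

end
end

section
/- Let G be a digraph on N containing no directed cycles, and let ij ∈ G be a single edge. Then for any utility parameters (γ,H,c), u_i(G − ij) − u_i(G) = −γ < 0; in particular, no agent ever has an incentive to sever a single edge in a digraph without directed cycles. -/
/-!
If `ij` is a single edge of a digraph `G` without directed cycles, then `j` does not reach `i`:
otherwise `i` and `j` would share an SCC and `ji` would be an edge. Hence `ij` lies on no closed
walk and on no walk ending at a node that reaches `i`. Removing it therefore keeps all SCCs
(`sameSCC_erase_iff`), keeps all condensation arcs into SCCs that reach `i`
(`condArc_erase_iff`), and so keeps exactly the condensation paths from a source to the SCC of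
`i`; the level of `i` is unchanged (`level_erase`). The cost term of `i` could see `ij` only
through the node `j`, but `j` has no edge to `i`, so it enters neither `N_in^s(i,G)` nor any
`P_i(G,k)`. Only the out-degree of `i` changes, by one, which costs `γ`.
-/

open Finset MeasureTheory ProbabilityTheory

attribute [local instance 10] Classical.propDecidable

noncomputable section

variable {n : ℕ}

/-! ### Effect of removing an edge `ij` such that `j` does not reach `i` -/

lemma not_reach_of_single {G : Network n} (hnc : noDirectedCycles G) {i j : Fin n}
    (hij : (i, j) ∈ G) (hji : (j, i) ∉ G) : ¬ reach G j i :=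
  fun h => hji (hnc i j hij ⟨Relation.ReflTransGen.single hij, h⟩)

lemma reach_of_reach_erase {G : Network n} {p : Fin n × Fin n} {a b : Fin n}
    (h : reach (G.erase p) a b) : reach G a b :=
  Relation.ReflTransGen.mono (fun _ _ hxy => Finset.mem_of_mem_erase hxy) _ _ h

/-- A walk whose end reaches its start avoids `ij`, since otherwise `j` would reach `i`. -/
lemma reach_erase_of_closed {G : Network n} {i j : Fin n} (hr : ¬ reach G j i) {a b : Fin n}
    (hab : reach G a b) (hba : reach G b a) : reach (G.erase (i, j)) a b := by
  induction hab using Relation.ReflTransGen.head_induction_on with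
  | refl => exact Relation.ReflTransGen.refl
  | @head a d had hdb ih =>
    refine Relation.ReflTransGen.head (Finset.mem_erase.2 ⟨?_, had⟩) (ih (hba.tail had))
    intro he
    obtain ⟨rfl, rfl⟩ := Prod.mk.inj he
    exact hr (Relation.ReflTransGen.trans hdb hba)

lemma sameSCC_erase_iff {G : Network n} {i j : Fin n} (hr : ¬ reach G j i) (a b : Fin n) :
    sameSCC (G.erase (i, j)) a b ↔ sameSCC G a b :=
  ⟨fun h => ⟨reach_of_reach_erase h.1, reach_of_reach_erase h.2⟩,
    fun h => ⟨reach_erase_of_closed hr h.1 h.2, reach_erase_of_closed hr h.2 h.1⟩⟩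

lemma condArc_of_condArc_erase {G : Network n} {i j : Fin n} (hr : ¬ reach G j i) {a b : Fin n}
    (h : condArc (G.erase (i, j)) a b) : condArc G a b := by
  obtain ⟨hne, a', b', ha, hb, he⟩ := h
  simp only [sameSCC_erase_iff hr] at hne ha hb
  exact ⟨hne, a', b', ha, hb, Finset.mem_of_mem_erase he⟩

/-- Condensation arcs into an SCC that reaches `i` are not realised by `ij`. -/
lemma condArc_erase_iff {G : Network n} {i j : Fin n} (hr : ¬ reach G j i) {a b : Fin n}
    (hb : reach G b i) : condArc (G.erase (i, j)) a b ↔ condArc G a b := by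
  refine ⟨condArc_of_condArc_erase hr, ?_⟩
  rintro ⟨hne, a', b', ha, hb', he⟩
  refine ⟨by rwa [sameSCC_erase_iff hr], a', b', (sameSCC_erase_iff hr _ _).2 ha,
    (sameSCC_erase_iff hr _ _).2 hb', Finset.mem_erase.2 ⟨?_, he⟩⟩
  intro h
  obtain ⟨rfl, rfl⟩ := Prod.mk.inj h
  exact hr (Relation.ReflTransGen.trans hb'.2 hb)

lemma reach_of_condArc {G : Network n} {a b : Fin n} (h : condArc G a b) : reach G a b := by
  obtain ⟨-, a', b', ha, hb, he⟩ := h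
  exact Relation.ReflTransGen.trans (ha.1.tail he) hb.2

/-- Every node on a condensation path ending in the SCC of `i` reaches `i`. -/
lemma reach_of_condPath {G : Network n} {i : Fin n} {m : ℕ} {f : ℕ → Fin n}
    (hm : reach G (f m) i) (hf : ∀ t, t < m → condArc G (f t) (f (t + 1))) :
    ∀ t, t ≤ m → reach G (f t) i := by
  intro t ht
  induction ht using Nat.decreasingInduction with
  | self => exact hm
  | of_succ t ht ih => exact Relation.ReflTransGen.trans (reach_of_condArc (hf t ht)) ih

lemma level_erase {G : Network n} {i j : Fin n} (hr : ¬ reach G j i) :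
    level (G.erase (i, j)) i = level G i := by
  unfold level
  congr 1
  ext m
  refine exists_congr fun f => ?_
  rw [sameSCC_erase_iff hr]
  constructor
  · rintro ⟨h0, hm, hf⟩
    have hf' : ∀ t, t < m → condArc G (f t) (f (t + 1)) :=
      fun t ht => condArc_of_condArc_erase hr (hf t ht)
    refine ⟨fun b hb => h0 b ?_, hm, hf'⟩
    exact (condArc_erase_iff hr (reach_of_condPath hm.1 hf' 0 (Nat.zero_le m))).2 hb
  · rintro ⟨h0, hm, hf⟩
    refine ⟨fun b hb => h0 b (condArc_of_condArc_erase hr hb), hm, fun t ht => ?_⟩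
    exact (condArc_erase_iff hr (reach_of_condPath hm.1 hf (t + 1) ht)).2 (hf t ht)

/-! ### The degree and cost terms -/

lemma card_Nout_erase {G : Network n} {i j : Fin n} (hij : (i, j) ∈ G) :
    (Nout (G.erase (i, j)) i).card + 1 = (Nout G i).card := by
  have h : Nout (G.erase (i, j)) i = (Nout G i).erase j := by
    ext k
    simp [Nout]
  rw [h]
  exact Finset.card_erase_add_one (by simpa [Nout] using hij)

lemma NinS_erase {G : Network n} {i j : Fin n} (hij : (i, j) ∈ G) (hji : (j, i) ∉ G) :
    NinS (G.erase (i, j)) i = NinS G i := by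
  ext k
  simp only [NinS, Finset.mem_filter, Finset.mem_univ, true_and, Finset.mem_erase, ne_eq,
    Prod.mk.injEq]
  grind

lemma Pset_erase {G : Network n} {i j : Fin n} (hji : (j, i) ∉ G)
    (k : Fin n) : Pset (G.erase (i, j)) i k = Pset G i k := by
  ext l
  simp only [Pset, Finset.mem_insert, Finset.mem_filter, Finset.mem_univ, true_and,
    Finset.mem_erase, ne_eq, Prod.mk.injEq]
  grind

/-- in a digraph without directed cycles, severing a single edge
changes the utility by exactly `-γ`, so it is never profitable. -/
theorem stmt2 {n : ℕ} (hn : 3 ≤ n) (G : Network n) (hG : validNetwork G)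
    (hnc : noDirectedCycles G) (i j : Fin n) (hij : (i, j) ∈ G) (hji : (j, i) ∉ G)
    (γ c : ℝ) (H : ℕ → ℝ) (hpar : UtilityParams γ c H) :
    utility γ c H (G.erase (i, j)) i - utility γ c H G i = -γ ∧
    utility γ c H (G.erase (i, j)) i < utility γ c H G i := by
  have hu : utility γ c H (G.erase (i, j)) i - utility γ c H G i = -γ := by
    unfold utility
    simp only [level_erase (not_reach_of_single hnc hij hji), NinS_erase hij hji,
      Pset_erase hji, ← card_Nout_erase hij]
    push_cast
    ring
  exact ⟨hu, by linarith [hpar.1]⟩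

end
end

section
/- There exist an integer n ≥ 3 and a digraph G on the agent set N = {1,…,n}, all of whose weakly connected components are hierarchical structures, such that G is not an equilibrium network for consensual agents for any choice of utility parameters (γ,H,c). -/
/-! The witness has three agents and the single edge `0 → 1`, agent `2` being isolated.

* Adding `1 → 0` merges agents `0` and `1` into one component of level `0`. Agent `0` is
  indifferent, so equilibrium forces agent `1` to lose: `γ + H 0 < H 1 - c`.
* Adding `2 → 0` gives agent `2` an extra `γ`, so equilibrium forces agent `0` to refuse;
  agent `0` would rise to level `1` at cost `c`, hence `H 1 - c < H 0`.

Together these give `γ < 0`. The levels are all read off from `level_eq_of_rank`, which identifies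
the level with any rank function on the nodes having the obvious local properties. -/

open Finset MeasureTheory ProbabilityTheory

attribute [local instance 10] Classical.propDecidable

noncomputable section

variable {n : ℕ}

theorem rank_le_of_reach {G : Network n} {r : Fin n → ℕ}
    (hr : ∀ a b, (a, b) ∈ G → r a ≤ r b) {a b : Fin n} (h : reach G a b) : r a ≤ r b := by
  induction h with
  | refl => exact le_rfl
  | tail _ h ih => exact ih.trans (hr _ _ h)

/-- A function `r` is the level function as soon as every edge either strictly raises `r` or is
undirected and preserves it, and every node of positive rank has an in-neighbour of rank exactly
one less. -/
theorem level_eq_of_rank {G : Network n} (r : Fin n → ℕ)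
    (hr : ∀ a b, (a, b) ∈ G → r a < r b ∨ (r a = r b ∧ (b, a) ∈ G))
    (hp : ∀ b, r b = 0 ∨ ∃ a, (a, b) ∈ G ∧ r a + 1 = r b) (i : Fin n) :
    level G i = r i := by
  have hle : ∀ a b, (a, b) ∈ G → r a ≤ r b := fun a b h => by
    rcases hr a b h with h | h <;> omega
  have hsame : ∀ a b, sameSCC G a b → r a = r b := fun a b h =>
    le_antisymm (rank_le_of_reach hle h.1) (rank_le_of_reach hle h.2)
  have harc : ∀ a b, condArc G a b → r a < r b := by
    rintro a b ⟨hn, a', b', ha, hb, he⟩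
    rw [hsame _ _ ha, hsame _ _ hb]
    rcases hr a' b' he with h | ⟨-, h⟩
    · exact h
    · -- An undirected edge would put `a` and `b` in the same component.
      exact absurd ⟨(ha.1.tail he).trans hb.2, (hb.1.tail h).trans ha.2⟩ hn
  have hex : ∀ m j, r j = m → ∃ f : ℕ → Fin n, isSourceSCC G (f 0) ∧ sameSCC G (f m) j ∧
      ∀ t, t < m → condArc G (f t) (f (t + 1)) := by
    intro m
    induction m with
    | zero =>
      intro j hj
      exact ⟨fun _ => j, fun b hb => by have : r b < r j := harc _ _ hb; omega,
        ⟨Relation.ReflTransGen.refl, Relation.ReflTransGen.refl⟩, fun t ht => by omega⟩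
    | succ m ih =>
      intro j hj
      obtain ⟨a, ha, har⟩ := (hp j).resolve_left (by omega)
      obtain ⟨f, h0, hm, hf⟩ := ih a (by omega)
      refine ⟨fun t => if t ≤ m then f t else j, by simpa using h0, ?_, ?_⟩
      · have : sameSCC G j j := ⟨Relation.ReflTransGen.refl, Relation.ReflTransGen.refl⟩
        simpa using this
      · intro t ht
        rcases Nat.lt_or_ge t m with h | h
        · simpa [h.le, Nat.succ_le_of_lt h] using hf t h
        · obtain rfl : t = m := by omega
          have : condArc G (f t) j :=
            ⟨fun h => by have := hsame _ _ h; have := hsame _ _ hm; omega,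
              a, j, hm, ⟨Relation.ReflTransGen.refl, Relation.ReflTransGen.refl⟩, ha⟩
          simpa using this
  have hub : ∀ m ∈ {m : ℕ | ∃ f : ℕ → Fin n, isSourceSCC G (f 0) ∧ sameSCC G (f m) i ∧
      ∀ t, t < m → condArc G (f t) (f (t + 1))}, m ≤ r i := by
    rintro m ⟨f, -, hm, hf⟩
    have : ∀ t, t ≤ m → t ≤ r (f t) := by
      intro t
      induction t with
      | zero => intro _; exact Nat.zero_le _
      | succ t ih =>
        intro ht
        have := harc _ _ (hf t (by omega))
        have := ih (by omega)
        omega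
    rw [← hsame _ _ hm]
    exact this m le_rfl
  exact le_antisymm (csSup_le' hub) (le_csSup ⟨r i, hub⟩ (hex _ i rfl))

/-- there is a digraph all of whose weakly connected components are
hierarchical structures (i.e. it has no directed cycles) that is an equilibrium
network for consensual agents for no choice of utility parameters. -/
theorem stmt8 :
    ∃ (n : ℕ), 3 ≤ n ∧ ∃ G : Network n, validNetwork G ∧ noDirectedCycles G ∧
      ∀ (γ c : ℝ) (H : ℕ → ℝ), UtilityParams γ c H → ¬ eqConsensual γ c H G := by
  refine ⟨3, le_rfl, {(0, 1)}, by simp [validNetwork], ?_, ?_⟩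
  · intro i j h hs
    have h2 := rank_le_of_reach (G := {((0 : Fin 3), (1 : Fin 3))}) (r := ![0, 1, 0])
      (by decide) hs.2
    simp only [mem_singleton, Prod.mk.injEq] at h
    obtain ⟨rfl, rfl⟩ := h
    simp at h2
  rintro γ c H ⟨hγ, -, -, -⟩ heq
  have l1 := level_eq_of_rank (G := {((0 : Fin 3), (1 : Fin 3))}) ![0, 1, 0]
    (by decide) (by decide)
  have l2 := level_eq_of_rank (G := insert (1, 0) {((0 : Fin 3), (1 : Fin 3))}) ![0, 0, 0]
    (by decide) (by decide)
  have l3 := level_eq_of_rank (G := insert (2, 0) {((0 : Fin 3), (1 : Fin 3))}) ![1, 2, 0]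
    (by decide) (by decide)
  have u10 : utility γ c H {((0 : Fin 3), (1 : Fin 3))} 0 = γ + H 0 := by
    have a : Nout {((0 : Fin 3), (1 : Fin 3))} 0 = {1} := by decide
    have b : NinS {((0 : Fin 3), (1 : Fin 3))} 0 = ∅ := by decide
    simp [utility, l1, a, b]
  have u11 : utility γ c H {((0 : Fin 3), (1 : Fin 3))} 1 = H 1 - c := by
    have a : Nout {((0 : Fin 3), (1 : Fin 3))} 1 = ∅ := by decide
    have b : NinS {((0 : Fin 3), (1 : Fin 3))} 1 = {0} := by decide
    have d : Pset {((0 : Fin 3), (1 : Fin 3))} 1 0 = {1} := by decide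
    simp [utility, l1, a, b, d]
  have u12 : utility γ c H {((0 : Fin 3), (1 : Fin 3))} 2 = H 0 := by
    have a : Nout {((0 : Fin 3), (1 : Fin 3))} 2 = ∅ := by decide
    have b : NinS {((0 : Fin 3), (1 : Fin 3))} 2 = ∅ := by decide
    simp [utility, l1, a, b]
  have u20 : utility γ c H (insert (1, 0) {((0 : Fin 3), (1 : Fin 3))}) 0 = γ + H 0 := by
    have a : Nout (insert (1, 0) {((0 : Fin 3), (1 : Fin 3))}) 0 = {1} := by decide
    have b : NinS (insert (1, 0) {((0 : Fin 3), (1 : Fin 3))}) 0 = ∅ := by decide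
    simp [utility, l2, a, b]
  have u21 : utility γ c H (insert (1, 0) {((0 : Fin 3), (1 : Fin 3))}) 1 = γ + H 0 := by
    have a : Nout (insert (1, 0) {((0 : Fin 3), (1 : Fin 3))}) 1 = {0} := by decide
    have b : NinS (insert (1, 0) {((0 : Fin 3), (1 : Fin 3))}) 1 = ∅ := by decide
    simp [utility, l2, a, b]
  have u30 : utility γ c H (insert (2, 0) {((0 : Fin 3), (1 : Fin 3))}) 0 = γ + H 1 - c := by
    have a : Nout (insert (2, 0) {((0 : Fin 3), (1 : Fin 3))}) 0 = {1} := by decide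
    have b : NinS (insert (2, 0) {((0 : Fin 3), (1 : Fin 3))}) 0 = {2} := by decide
    have d : Pset (insert (2, 0) {((0 : Fin 3), (1 : Fin 3))}) 0 2 = {0} := by decide
    simp [utility, l3, a, b, d]
  have u32 : utility γ c H (insert (2, 0) {((0 : Fin 3), (1 : Fin 3))}) 2 = γ + H 0 := by
    have a : Nout (insert (2, 0) {((0 : Fin 3), (1 : Fin 3))}) 2 = {0} := by decide
    have b : NinS (insert (2, 0) {((0 : Fin 3), (1 : Fin 3))}) 2 = ∅ := by decide
    simp [utility, l3, a, b]
  have e1 := (heq 1 0 (by decide)).2 (by decide)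
  have e2 := (heq 2 0 (by decide)).2 (by decide)
  rw [u10, u11, u20, u21] at e1
  rw [u10, u12, u30, u32] at e2
  rcases e1 with e1 | ⟨-, e1⟩ <;> rcases e2 with e2 | ⟨-, e2⟩ <;> linarith

end
end

section
/- Let G be the complete digraph on N (containing both ij and ji for every pair of distinct nodes i,j). Then for every pair of distinct nodes i,j, u_i(G − ij) − u_i(G) = −γ − c/(n−1) < 0, and consequently, for any utility parameters (γ,H,c), G is an equilibrium network for non-consensual agents and an equilibrium network for consensual agents. -/
/-!
Both the complete digraph `G` and `G - ij` are strongly connected: in `G - ij`, a third node `k`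
(available because `n ≥ 3`) gives the detour `i → k → j`. Hence there is a single SCC, every level
is `0` (`level_eq_zero`), and the terms `H(ℓ_i)` cancel in the utility difference.

In `G` agent `i` has `n - 1` out-neighbours and no subordinates (`utility_complete`). In `G - ij`
it has `n - 2` out-neighbours and the single subordinate `j`, whose peer set `P_i(G - ij, j)` is
everything except `j`, of size `n - 1` (`utility_erase`). The difference is `-γ - c/(n-1) < 0`.
No edge can be added to `G`, so only these deletions matter for either notion of equilibrium.
-/

open Finset MeasureTheory ProbabilityTheory

attribute [local instance 10] Classical.propDecidable

noncomputable section

variable {n : ℕ}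

/-- In a strongly connected network the condensation is one point, so every level is `0`. -/
theorem level_eq_zero (G : Network n) (h : ∀ a b, reach G a b) (i : Fin n) : level G i = 0 := by
  have key : ∀ a b, ¬ condArc G a b := fun a b hab => hab.1 ⟨h a b, h b a⟩
  -- A path of positive length would contain a condensation arc, so the supremum is over `{0}`
  -- or `∅`, and is `0` in both cases.
  refine Nat.le_zero.mp (csSup_le' ?_)
  rintro m ⟨f, -, -, hf⟩
  by_contra hm
  exact key _ _ (hf 0 (by omega))

/-- The complete digraph on `Fin n`. -/
def completeNet (n : ℕ) : Network n := univ.filter fun p : Fin n × Fin n => p.1 ≠ p.2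

theorem mem_completeNet {a b : Fin n} : (a, b) ∈ completeNet n ↔ a ≠ b := by
  simp [completeNet]

theorem reach_complete (a b : Fin n) : reach (completeNet n) a b := by
  by_cases hab : a = b
  · exact hab ▸ Relation.ReflTransGen.refl
  · exact Relation.ReflTransGen.single (mem_completeNet.2 hab)

/-- `G - ij` stays strongly connected, through a detour by a third node. -/
theorem reach_erase (hn : 3 ≤ n) {i j : Fin n} (a b : Fin n) :
    reach ((completeNet n).erase (i, j)) a b := by
  by_cases hab : a = b
  · exact hab ▸ Relation.ReflTransGen.refl
  by_cases he : a = i ∧ b = j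
  · obtain ⟨rfl, rfl⟩ := he
    obtain ⟨k, hk⟩ : ∃ k : Fin n, k ∉ ({a, b} : Finset (Fin n)) := by
      by_contra! hall
      have h1 : (univ : Finset (Fin n)).card ≤ ({a, b} : Finset (Fin n)).card :=
        card_le_card fun x _ => hall x
      have h2 := card_le_two (a := a) (b := b)
      rw [card_univ, Fintype.card_fin] at h1
      omega
    simp only [mem_insert, mem_singleton, not_or] at hk
    refine (Relation.ReflTransGen.single (b := k) ?_).tail ?_
    · exact mem_erase.2 ⟨fun h => hk.2 (Prod.ext_iff.1 h).2, mem_completeNet.2 (Ne.symm hk.1)⟩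
    · exact mem_erase.2 ⟨fun h => hk.1 (Prod.ext_iff.1 h).1, mem_completeNet.2 hk.2⟩
  · exact Relation.ReflTransGen.single
      (mem_erase.2 ⟨fun h => he (Prod.ext_iff.1 h), mem_completeNet.2 hab⟩)

theorem utility_complete (hn : 3 ≤ n) (γ c : ℝ) (H : ℕ → ℝ) (i : Fin n) :
    utility γ c H (completeNet n) i = ((n : ℝ) - 1) * γ + H 0 := by
  have hout : Nout (completeNet n) i = univ.erase i := by
    ext k
    simp [Nout, mem_completeNet, eq_comm]
  have hin : NinS (completeNet n) i = ∅ := by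
    ext k
    simp [NinS, mem_completeNet, eq_comm]
  rw [utility, level_eq_zero _ reach_complete, hout, hin, card_erase_of_mem (mem_univ i),
    card_univ, Fintype.card_fin, Nat.cast_sub (by omega)]
  simp

theorem utility_erase (hn : 3 ≤ n) (γ c : ℝ) (H : ℕ → ℝ) {i j : Fin n} (hij : i ≠ j) :
    utility γ c H ((completeNet n).erase (i, j)) i
      = ((n : ℝ) - 2) * γ + H 0 - c / ((n : ℝ) - 1) := by
  have hout : Nout ((completeNet n).erase (i, j)) i = (univ.erase i).erase j := by
    ext k
    simp [Nout, mem_completeNet, eq_comm]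
  have hin : NinS ((completeNet n).erase (i, j)) i = {j} := by
    ext k
    simp only [NinS, mem_filter, mem_univ, true_and, mem_erase, mem_completeNet, Prod.mk.injEq,
      mem_singleton]
    grind
  have hP : Pset ((completeNet n).erase (i, j)) i j = univ.erase j := by
    ext k
    simp only [Pset, mem_insert, mem_filter, mem_univ, true_and, mem_erase, mem_completeNet,
      Prod.mk.injEq]
    grind
  have hcard : ((univ.erase i).erase j).card = n - 2 := by
    rw [card_erase_of_mem (mem_erase.2 ⟨hij.symm, mem_univ j⟩), card_erase_of_mem (mem_univ i),
      card_univ, Fintype.card_fin]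
    omega
  rw [utility, level_eq_zero _ (reach_erase hn), hout, hin, sum_singleton, hP, hcard,
    card_erase_of_mem (mem_univ j), card_univ, Fintype.card_fin, Nat.cast_sub (by omega),
    Nat.cast_sub (by omega)]
  push_cast
  ring

/-- the complete digraph is an equilibrium network for both agent types,
and severing any edge changes the utility by exactly `-γ - c/(n-1)`. -/
theorem stmt14 {n : ℕ} (hn : 3 ≤ n)
    (G : Network n) (hGdef : G = univ.filter fun p : Fin n × Fin n => p.1 ≠ p.2)
    (γ c : ℝ) (H : ℕ → ℝ) (hpar : UtilityParams γ c H) :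
    (∀ i j : Fin n, i ≠ j →
      utility γ c H (G.erase (i, j)) i - utility γ c H G i = -γ - c / ((n : ℝ) - 1) ∧
      utility γ c H (G.erase (i, j)) i - utility γ c H G i < 0) ∧
    eqNonConsensual γ c H G ∧ eqConsensual γ c H G := by
  obtain ⟨hγ, hc, -, -⟩ := hpar
  obtain rfl : G = completeNet n := by
    rw [hGdef]
    ext p
    simp [completeNet]
  have hn1 : (0 : ℝ) < (n : ℝ) - 1 := by
    have : (3 : ℝ) ≤ n := by exact_mod_cast hn
    linarith
  have hdiff : ∀ i j : Fin n, i ≠ j →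
      utility γ c H ((completeNet n).erase (i, j)) i - utility γ c H (completeNet n) i
        = -γ - c / ((n : ℝ) - 1) := by
    intro i j hij
    rw [utility_erase hn γ c H hij, utility_complete hn]
    ring
  have hneg : ∀ i j : Fin n, i ≠ j →
      utility γ c H ((completeNet n).erase (i, j)) i - utility γ c H (completeNet n) i < 0 := by
    intro i j hij
    rw [hdiff i j hij]
    have := div_pos hc hn1
    linarith
  exact ⟨fun i j hij => ⟨hdiff i j hij, hneg i j hij⟩,
    fun i j hij => ⟨fun _ => sub_neg.1 (hneg i j hij),
      fun h => absurd (mem_completeNet.2 hij) h⟩,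
    fun i j hij => ⟨fun _ => sub_neg.1 (hneg i j hij),
      fun h => absurd (mem_completeNet.2 hij) h⟩⟩

end
end

section
/- Let G be a digraph on N containing a single edge ij that lies on a cycle of G (so that i and j belong to the same strongly connected component). Then for any utility parameters (γ,H,c), u_j(G + ji) − u_j(G) = γ + c·(Σ_{k ∈ N_in^s(j,G)} 1/|P_j(G,k)| − Σ_{k ∈ N_in^s(j,G)∖{i}} 1/|P_j(G+ji,k)|) > 0; in particular, agent j always has an incentive to establish the edge ji. -/
/-!
Since `j` already reaches `i`, the new edge `ji` is a shortcut inside one strongly connected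
component. It therefore changes neither reachability (`reach_insert_of_reach`), nor the arcs of the
condensation (`condArc_insert_of_sameSCC`), nor the level of any node, so the `H`-term of `u_j` is
unaffected. The remaining terms change explicitly: `j` gains exactly the out-neighbor `i`, and `i`
is removed from the subordinates of `j`. This gives the formula.

For positivity, adding an edge can only enlarge the sets `P_j(·,k)`, all of which contain `j`, so
every remaining cost summand weakly decreases, and the nonnegative summand of `i` is dropped. Hence
the bracket multiplied by `c` is nonnegative, and the gain is at least `γ > 0`.
-/

open Finset MeasureTheory ProbabilityTheory

attribute [local instance 10] Classical.propDecidable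

noncomputable section

variable {n : ℕ}

theorem reach_insert_of_reach {G : Network n} {a b : Fin n} (hab : reach G a b) :
    reach (insert (a, b) G) = reach G := by
  funext x y
  apply propext
  constructor
  · intro h
    induction h with
    | refl => exact Relation.ReflTransGen.refl
    | tail _ hstep ih =>
      rcases Finset.mem_insert.mp hstep with h | h
      · obtain ⟨rfl, rfl⟩ := Prod.mk.inj h
        exact Relation.ReflTransGen.trans ih hab
      · exact Relation.ReflTransGen.tail ih h
  · intro h
    exact Relation.ReflTransGen.mono (fun _ _ h => Finset.mem_insert_of_mem h) _ _ h

theorem sameSCC_insert_of_reach {G : Network n} {a b : Fin n} (hab : reach G a b) :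
    sameSCC (insert (a, b) G) = sameSCC G := by
  funext x y
  simp only [sameSCC, reach_insert_of_reach hab]

/-- An edge inserted inside a strongly connected component cannot be the witness of an arc of the
condensation, because an arc joins two different components. -/
theorem condArc_insert_of_sameSCC {G : Network n} {a b : Fin n} (hab : sameSCC G a b) :
    condArc (insert (a, b) G) = condArc G := by
  funext x y
  simp only [condArc, sameSCC_insert_of_reach hab.1]
  apply propext
  constructor
  · rintro ⟨hne, x', y', hx, hy, hmem⟩
    refine ⟨hne, x', y', hx, hy, ?_⟩
    rcases Finset.mem_insert.mp hmem with h | h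
    · obtain ⟨rfl, rfl⟩ := Prod.mk.inj h
      exact absurd ⟨(hx.1.trans hab.1).trans hy.2, (hy.1.trans hab.2).trans hx.2⟩ hne
    · exact h
  · rintro ⟨hne, x', y', hx, hy, hmem⟩
    exact ⟨hne, x', y', hx, hy, Finset.mem_insert_of_mem hmem⟩

theorem level_insert_of_sameSCC {G : Network n} {a b : Fin n} (hab : sameSCC G a b) :
    level (insert (a, b) G) = level G := by
  funext x
  simp only [level, isSourceSCC, sameSCC_insert_of_reach hab.1, condArc_insert_of_sameSCC hab]

theorem card_Nout_insert {G : Network n} {a b : Fin n} (hab : (a, b) ∉ G) :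
    (Nout (insert (a, b) G) a).card = (Nout G a).card + 1 := by
  have h : Nout (insert (a, b) G) a = insert b (Nout G a) := by
    ext x
    simp [Nout]
  rw [h, Finset.card_insert_of_notMem (by simpa [Nout] using hab)]

theorem NinS_insert {G : Network n} {a b : Fin n} (hne : a ≠ b) :
    NinS (insert (a, b) G) a = (NinS G a).erase b := by
  ext x
  simp only [NinS, Finset.mem_filter, Finset.mem_univ, true_and, Finset.mem_insert,
    Finset.mem_erase, Prod.mk.injEq]
  tauto

theorem card_Pset_pos (G : Network n) (a k : Fin n) : 0 < (Pset G a k).card :=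
  Finset.card_pos.mpr ⟨a, Finset.mem_insert_self _ _⟩

theorem sum_inv_card_Pset_insert_le (G : Network n) (a b : Fin n) :
    ∑ k ∈ (NinS G a).erase b, (1 : ℝ) / ((Pset (insert (a, b) G) a k).card : ℝ) ≤
      ∑ k ∈ NinS G a, (1 : ℝ) / ((Pset G a k).card : ℝ) := by
  calc
    _ ≤ ∑ k ∈ (NinS G a).erase b, (1 : ℝ) / ((Pset G a k).card : ℝ) := by
      refine Finset.sum_le_sum fun k _ => one_div_le_one_div_of_le ?_ ?_
      · exact_mod_cast card_Pset_pos G a k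
      · exact_mod_cast Finset.card_le_card (Pset_mono (Finset.subset_insert _ _) a k)
    _ ≤ _ := Finset.sum_le_sum_of_subset_of_nonneg (Finset.erase_subset _ _)
      fun k _ _ => by positivity

/-- if the single edge `ij` lies on a cycle, agent `j` always has an
incentive to establish the edge `ji`. -/
theorem stmt15 {n : ℕ} (hn : 3 ≤ n) (G : Network n) (hG : validNetwork G)
    (i j : Fin n) (hij : (i, j) ∈ G) (hji : (j, i) ∉ G) (hcyc : reach G j i)
    (γ c : ℝ) (H : ℕ → ℝ) (hpar : UtilityParams γ c H) :
    utility γ c H (insert (j, i) G) j - utility γ c H G j =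
      γ + c * ((∑ k ∈ NinS G j, (1 : ℝ) / ((Pset G j k).card : ℝ)) -
        ∑ k ∈ (NinS G j).erase i, (1 : ℝ) / ((Pset (insert (j, i) G) j k).card : ℝ)) ∧
    utility γ c H G j < utility γ c H (insert (j, i) G) j := by
  have hscc : sameSCC G j i := ⟨hcyc, Relation.ReflTransGen.single hij⟩
  have hne : j ≠ i := fun h => hG _ hij h.symm
  have heq : utility γ c H (insert (j, i) G) j - utility γ c H G j =
      γ + c * ((∑ k ∈ NinS G j, (1 : ℝ) / ((Pset G j k).card : ℝ)) -
        ∑ k ∈ (NinS G j).erase i, (1 : ℝ) / ((Pset (insert (j, i) G) j k).card : ℝ)) := by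
    simp only [utility, level_insert_of_sameSCC hscc, card_Nout_insert hji, NinS_insert hne]
    push_cast
    ring
  refine ⟨heq, ?_⟩
  have hgain := mul_nonneg hpar.2.1.le (sub_nonneg.mpr (sum_inv_card_Pset_insert_le G j i))
  linarith [hpar.1]

end
end
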